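/- Let G be a finite connected simple graph that is saturated, whose number of edges is at most its number of vertices, and with mp(G) = 3. Then G is isomorphic to the complete graph K_3. -/

import Mathlib

/-!
Write `d` for the degree. Since `mp G = 3`, the graph `G` has no path on four vertices with
non-decreasing degrees (`HasMono4`), while `G + e` has one for every non-edge `e`.

Because there are at most as many edges as vertices, the degrees sum to at most twice the number
of vertices. If there is no leaf, all degrees are `2`, every path is monotone, and `G` is a
triangle (`iso_of_no_leaf`).

Suppose there is a leaf `u`. Joining `u` to a non-adjacent vertex of maximum degree would create no
monotone path on four vertices, so every leaf is adjacent to every vertex of maximum degree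
(`leaf_adj_max`). As `u` has a single neighbour `w`, the maximum degree is attained only at `w`, and
all leaves hang from `w`. Let `v` have the largest degree among the vertices other than `w`; then
`d v ≥ 2`, as `G` is not a star. In `G + uv` the vertex `v` is exceeded or matched only by `w`, and
both neighbours of `u` have degree larger than `u`. It follows that a new monotone path on four
vertices must have the form `a, b, w, v`, so that `w` has the two non-leaf neighbours `b` and
`v`. A degree count (`no_two_branches`) rules this out, and contradicts saturation
(`false_of_leaf`).
-/

open SimpleGraph

variable {V : Type*}

/-- The degree of a vertex `v`: the number of neighbours of `v`. -/
noncomputable def gdeg (G : SimpleGraph V) (v : V) : ℕ := (G.neighborSet v).ncard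

/-- A walk is degree monotone if the sequence of degrees of the vertices in the
order in which they appear on the walk is monotone (non-decreasing or non-increasing). -/
def IsDegMonotone (G : SimpleGraph V) {u v : V} (p : G.Walk u v) : Prop :=
  (p.support.map (gdeg G)).Chain' (· ≤ ·) ∨ (p.support.map (gdeg G)).Chain' (· ≥ ·)

/-- `mp G` is the maximum number of vertices of a degree monotone path in `G`. -/
noncomputable def mp (G : SimpleGraph V) : ℕ :=
  sSup {n | ∃ (u v : V) (p : G.Walk u v), p.IsPath ∧ IsDegMonotone G p ∧ p.support.length = n}

/-- The graph obtained from `G` by adding the edge `uv`. -/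
def addEdge (G : SimpleGraph V) (u v : V) : SimpleGraph V :=
  G ⊔ fromEdgeSet {s(u, v)}

/-- `G` is saturated if adding any edge between non-adjacent vertices increases `mp`. -/
def Saturated (G : SimpleGraph V) : Prop :=
  ∀ u v : V, u ≠ v → ¬ G.Adj u v → mp G < mp (addEdge G u v)

/-- `G` is `k`-saturated if `mp G < k` and adding any edge between non-adjacent
vertices creates a degree monotone path on at least `k` vertices. -/
def KSaturated (k : ℕ) (G : SimpleGraph V) : Prop :=
  mp G < k ∧ ∀ u v : V, u ≠ v → ¬ G.Adj u v → k ≤ mp (addEdge G u v)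

/-- `hSat n k` is the minimum number of edges of a `k`-saturated graph on `n` vertices. -/
noncomputable def hSat (n k : ℕ) : ℕ :=
  sInf {m | ∃ G : SimpleGraph (Fin n), KSaturated k G ∧ G.edgeSet.ncard = m}

/-- A path on at least four vertices with non-decreasing degrees, cut down to its first four. -/
def HasMono4 (G : SimpleGraph V) : Prop :=
  ∃ a b c d : V, G.Adj a b ∧ G.Adj b c ∧ G.Adj c d ∧ a ≠ c ∧ a ≠ d ∧ b ≠ d ∧
    gdeg G a ≤ gdeg G b ∧ gdeg G b ≤ gdeg G c ∧ gdeg G c ≤ gdeg G d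

/-! ### Monotone paths on three and four vertices -/

lemma mp_bddAbove [Fintype V] (G : SimpleGraph V) :
    BddAbove {n | ∃ (u v : V) (p : G.Walk u v),
      p.IsPath ∧ IsDegMonotone G p ∧ p.support.length = n} := by
  refine ⟨Fintype.card V, ?_⟩
  rintro n ⟨u, v, p, hp, -, rfl⟩
  exact hp.support_nodup.length_le_card

lemma HasMono4.le_mp [Fintype V] {G : SimpleGraph V} (h : HasMono4 G) : 4 ≤ mp G := by
  obtain ⟨a, b, c, d, hab, hbc, hcd, hac, had, hbd, h1, h2, h3⟩ := h
  refine le_csSup (mp_bddAbove G)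
    ⟨a, d, .cons hab (.cons hbc (.cons hcd .nil)), ?_, Or.inl ?_, by simp⟩
  · simp [Walk.isPath_def, hab.ne, hbc.ne, hcd.ne, hac, had, hbd]
  · change List.IsChain _ _
    simp [h1, h2, h3]

/-- The maximum in `mp` is attained, and reversing the path if necessary makes its degrees
non-decreasing. -/
lemma exists_mono_path [Fintype V] {G : SimpleGraph V} (hpos : 0 < mp G) :
    ∃ (u v : V) (p : G.Walk u v), p.IsPath ∧
      (p.support.map (gdeg G)).IsChain (· ≤ ·) ∧ p.support.length = mp G := by
  have hne : {n | ∃ (u v : V) (p : G.Walk u v),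
      p.IsPath ∧ IsDegMonotone G p ∧ p.support.length = n}.Nonempty := by
    by_contra hne
    rw [Set.not_nonempty_iff_eq_empty] at hne
    -- the supremum of the empty set of naturals is `0`
    rw [mp, hne] at hpos
    simp at hpos
  obtain ⟨u, v, p, hp, hm, hl⟩ := Nat.sSup_mem hne (mp_bddAbove G)
  rcases hm with hm | hm
  · exact ⟨u, v, p, hp, hm, hl⟩
  · refine ⟨v, u, p.reverse, hp.reverse, ?_, ?_⟩
    · rw [Walk.support_reverse, List.map_reverse, List.isChain_reverse]
      exact hm
    · rw [Walk.support_reverse, List.length_reverse]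
      exact hl

lemma hasMono4_of_le_mp [Fintype V] {G : SimpleGraph V} (h : 4 ≤ mp G) : HasMono4 G := by
  obtain ⟨u, v, p, hp, hm, hl⟩ := exists_mono_path (G := G) (by omega)
  rw [← hl] at h
  match p, hp, hm, h with
  | .nil, _, _, h => simp at h
  | .cons _ .nil, _, _, h => simp at h
  | .cons _ (.cons _ .nil), _, _, h => simp at h
  | .cons (v := b) h1 (.cons (v := c) h2 (.cons (v := d) h3 q)), hp, hm, _ =>
    have hq : d ∈ q.support := q.start_mem_support
    rw [Walk.isPath_def] at hp
    simp only [Walk.support_cons, List.nodup_cons, List.mem_cons, not_or] at hp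
    rw [Walk.support_cons, Walk.support_cons, Walk.support_cons, ← Walk.cons_tail_support q] at hm
    simp only [List.map_cons, List.isChain_cons_cons] at hm
    refine ⟨u, b, c, d, h1, h2, h3, hp.1.2.1, ?_, ?_, hm.1, hm.2.1, hm.2.2.1⟩
    · rintro rfl; exact hp.1.2.2 hq
    · rintro rfl; exact hp.2.1.2 hq

lemma exists_mono3_of_le_mp [Fintype V] {G : SimpleGraph V} (h : 3 ≤ mp G) :
    ∃ a b c : V, G.Adj a b ∧ G.Adj b c ∧ a ≠ c ∧ gdeg G a ≤ gdeg G b ∧ gdeg G b ≤ gdeg G c := by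
  obtain ⟨u, v, p, hp, hm, hl⟩ := exists_mono_path (G := G) (by omega)
  rw [← hl] at h
  match p, hp, hm, h with
  | .nil, _, _, h => simp at h
  | .cons _ .nil, _, _, h => simp at h
  | .cons (v := b) h1 (.cons (v := c) h2 q), hp, hm, _ =>
    have hq : c ∈ q.support := q.start_mem_support
    rw [Walk.isPath_def] at hp
    simp only [Walk.support_cons, List.nodup_cons, List.mem_cons, not_or] at hp
    rw [Walk.support_cons, Walk.support_cons, ← Walk.cons_tail_support q] at hm
    simp only [List.map_cons, List.isChain_cons_cons] at hm
    refine ⟨u, b, c, h1, h2, ?_, hm.1, hm.2.1⟩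
    rintro rfl; exact hp.1.2 hq

/-! ### Degrees, closed vertex sets and edge addition -/

lemma two_le_gdeg [Finite V] {G : SimpleGraph V} {x y z : V} (hy : G.Adj x y) (hz : G.Adj x z)
    (hne : y ≠ z) : 2 ≤ gdeg G x := by
  rw [gdeg, ← Set.ncard_pair hne]
  refine Set.ncard_le_ncard ?_ (Set.toFinite _)
  rintro t (rfl | rfl) <;> assumption

lemma eq_or_eq_of_gdeg_le_two [Finite V] {G : SimpleGraph V} {x y z t : V} (h : gdeg G x ≤ 2)
    (hy : G.Adj x y) (hz : G.Adj x z) (hne : y ≠ z) (ht : G.Adj x t) : t = y ∨ t = z := by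
  have hs : ({y, z} : Set V) ⊆ G.neighborSet x := by
    rintro t (rfl | rfl) <;> assumption
  have := Set.eq_of_subset_of_ncard_le hs (by rw [Set.ncard_pair hne]; exact h) (Set.toFinite _)
  have ht' : t ∈ G.neighborSet x := ht
  rw [← this] at ht'
  simpa using ht'

lemma exists_other_nbr {G : SimpleGraph V} {x : V} (h : 2 ≤ gdeg G x) (y : V) :
    ∃ z, G.Adj x z ∧ z ≠ y :=
  Set.exists_ne_of_one_lt_ncard h y

lemma one_le_gdeg [Finite V] {G : SimpleGraph V} {x y : V} (h : G.Adj x y) : 1 ≤ gdeg G x :=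
  (Set.ncard_pos (Set.toFinite _)).2 ⟨y, h⟩

lemma exists_nbr {G : SimpleGraph V} {x : V} (h : 1 ≤ gdeg G x) : ∃ y, G.Adj x y :=
  Set.nonempty_of_ncard_ne_zero (Nat.one_le_iff_ne_zero.1 h)

lemma mem_of_closed {G : SimpleGraph V} (hc : G.Connected) (S : Set V) {x : V} (hx : x ∈ S)
    (hS : ∀ a ∈ S, ∀ b, G.Adj a b → b ∈ S) (y : V) : y ∈ S := by
  obtain ⟨p⟩ := hc.preconnected x y
  induction p with
  | nil => exact hx
  | cons h _ ih => exact ih (hS _ hx _ h)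

lemma addEdge_adj {G : SimpleGraph V} {u v : V} (huv : u ≠ v) (a b : V) :
    (addEdge G u v).Adj a b ↔ G.Adj a b ∨ (a = u ∧ b = v) ∨ (a = v ∧ b = u) := by
  simp only [addEdge, sup_adj, fromEdgeSet_adj, Set.mem_singleton_iff, Sym2.eq_iff]
  grind

lemma gdeg_addEdge_left [Finite V] {G : SimpleGraph V} {u v : V} (huv : u ≠ v)
    (h : ¬ G.Adj u v) : gdeg (addEdge G u v) u = gdeg G u + 1 := by
  have : (addEdge G u v).neighborSet u = insert v (G.neighborSet u) := by
    ext t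
    simp only [mem_neighborSet, addEdge_adj huv, Set.mem_insert_iff]
    grind
  rw [gdeg, this, Set.ncard_insert_of_notMem (by simpa using h) (Set.toFinite _), gdeg]

lemma gdeg_addEdge_right [Finite V] {G : SimpleGraph V} {u v : V} (huv : u ≠ v)
    (h : ¬ G.Adj u v) : gdeg (addEdge G u v) v = gdeg G v + 1 := by
  have : addEdge G u v = addEdge G v u := by rw [addEdge, addEdge, Sym2.eq_swap]
  rw [this]
  exact gdeg_addEdge_left huv.symm (fun h' => h h'.symm)

lemma gdeg_addEdge_other {G : SimpleGraph V} {u v x : V} (huv : u ≠ v)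
    (hu : x ≠ u) (hv : x ≠ v) : gdeg (addEdge G u v) x = gdeg G x := by
  have : (addEdge G u v).neighborSet x = G.neighborSet x := by
    ext t
    simp only [mem_neighborSet, addEdge_adj huv]
    grind
  rw [gdeg, this, gdeg]

lemma sum_gdeg_le [Fintype V] {G : SimpleGraph V} (hE : G.edgeSet.ncard ≤ Fintype.card V) :
    ∑ x, gdeg G x ≤ ∑ _x : V, 2 := by
  classical
  have h1 : ∀ x, gdeg G x = G.degree x := fun x => by
    rw [gdeg, Set.ncard_eq_toFinset_card', ← neighborFinset_def, card_neighborFinset_eq_degree]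
  simp only [h1, sum_degrees_eq_twice_card_edges]
  rw [Set.ncard_eq_toFinset_card', ← edgeFinset] at hE
  simp
  omega

/-! ### Graphs without leaves -/

/-- The case without leaves: all degrees are `2`, so every path is degree monotone, and the
absence of a path on four vertices forces a triangle. -/
lemma iso_of_no_leaf [Fintype V] {G : SimpleGraph V} (hc : G.Connected) (hno : ¬ HasMono4 G)
    (hE : G.edgeSet.ncard ≤ Fintype.card V) (hd : ∀ x, 2 ≤ gdeg G x) :
    Nonempty (G ≃g (⊤ : SimpleGraph (Fin 3))) := by
  have heq : ∀ x, gdeg G x = 2 := fun x =>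
    (((Finset.sum_eq_sum_iff_of_le (fun i _ => hd i)).1
      (le_antisymm (Finset.sum_le_sum fun i _ => hd i) (sum_gdeg_le hE))) x
      (Finset.mem_univ x)).symm
  obtain ⟨b⟩ := hc.nonempty
  obtain ⟨a, hba, -⟩ := exists_other_nbr (hd b) b
  obtain ⟨c, hbc, hca⟩ := exists_other_nbr (hd b) a
  have hac : G.Adj a c := by
    obtain ⟨t, hat, htb⟩ := exists_other_nbr (hd a) b
    by_cases htc : t = c
    · exact htc ▸ hat
    · exact absurd ⟨t, a, b, c, hat.symm, hba.symm, hbc, htb, htc, hca.symm,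
        by simp [heq], by simp [heq], by simp [heq]⟩ hno
  have hall : ∀ y, y ∈ ({a, b, c} : Set V) := by
    refine mem_of_closed hc _ (Set.mem_insert a _) ?_
    rintro x (rfl | rfl | rfl) t ht
    · rcases eq_or_eq_of_gdeg_le_two (heq _).le hba.symm hac hbc.ne ht with rfl | rfl <;> simp
    · rcases eq_or_eq_of_gdeg_le_two (heq _).le hba hbc hca.symm ht with rfl | rfl <;> simp
    · rcases eq_or_eq_of_gdeg_le_two (heq _).le hbc.symm hac.symm hba.ne ht with rfl | rfl <;> simp
  have htop : G = ⊤ := by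
    ext x y
    rw [top_adj]
    refine ⟨fun h => h.ne, fun hxy => ?_⟩
    have hx := hall x
    have hy := hall y
    simp only [Set.mem_insert_iff, Set.mem_singleton_iff] at hx hy
    rcases hx with rfl | rfl | rfl <;> rcases hy with rfl | rfl | rfl <;>
      first | exact absurd rfl hxy | assumption | (apply SimpleGraph.Adj.symm; assumption)
  have hcard : Fintype.card V = 3 := by
    classical
    have : (Finset.univ : Finset V) = {a, b, c} := by
      ext y; simpa using hall y
    rw [← Finset.card_univ, this, Finset.card_eq_three]
    exact ⟨a, b, c, hba.ne.symm, hca.symm, hbc.ne, rfl⟩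
  subst htop
  exact ⟨Iso.completeGraph (Fintype.equivFinOfCardEq hcard)⟩

/-! ### Graphs with a leaf -/

/-- If a leaf `u` is not adjacent to a vertex `w` of maximum degree, adding `uw` creates no
monotone path on four vertices: `w` becomes the strict maximum and so must end such a path, and
a path through `u` would force a pendant path starting at `u` that either is already too long in `G`
or exhausts `G` without meeting `w`. -/
lemma leaf_adj_max [Fintype V] {G : SimpleGraph V} (hc : G.Connected) (hno : ¬ HasMono4 G)
    (hadd : ∀ u v : V, u ≠ v → ¬ G.Adj u v → HasMono4 (addEdge G u v))
    {u w : V} (hu : gdeg G u = 1) (hw : ∀ x, gdeg G x ≤ gdeg G w) (hw2 : 2 ≤ gdeg G w) :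
    G.Adj u w := by
  by_contra hnadj
  have huw : u ≠ w := by rintro rfl; omega
  have hleaf : ∀ y z, G.Adj u y → G.Adj u z → y = z := fun y z hy hz => by
    by_contra hne
    have := two_le_gdeg hy hz hne
    omega
  -- the pendant path `u - x - a` with `x` and `a` of degree at most `2`, avoiding `w`
  have key : ∀ x a, G.Adj u x → G.Adj x a → a ≠ u → gdeg G x ≤ 2 → gdeg G a ≤ 2 →
      x ≠ w → a ≠ w → False := by
    intro x a hux hxa hau hx2 ha2 hxw haw
    have hx : gdeg G x = 2 := le_antisymm hx2 (two_le_gdeg hux.symm hxa hau.symm)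
    have hxn : ∀ t, G.Adj x t → t = u ∨ t = a := fun t ht =>
      eq_or_eq_of_gdeg_le_two hx2 hux.symm hxa hau.symm ht
    by_cases ha : 2 ≤ gdeg G a
    · obtain ⟨b, hab, hbx⟩ := exists_other_nbr ha x
      have hbu : b ≠ u := by
        rintro rfl
        exact hxa.ne (hleaf _ _ hux hab.symm)
      have han : ∀ t, G.Adj a t → t = x ∨ t = b := fun t ht =>
        eq_or_eq_of_gdeg_le_two ha2 hxa.symm hab hbx.symm ht
      by_cases hb : 2 ≤ gdeg G b
      · exact hno ⟨u, x, a, b, hux, hxa, hab, hau.symm, hbu.symm, hbx.symm,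
          by omega, by omega, by omega⟩
      · have := mem_of_closed hc ({u, x, a, b} : Set V) (Set.mem_insert u _) (by
          rintro s (rfl | rfl | rfl | rfl) t ht
          · simp [hleaf _ _ ht hux]
          · rcases hxn t ht with rfl | rfl <;> simp
          · rcases han t ht with rfl | rfl <;> simp
          · have : t = a := by
              by_contra hne
              exact hb (two_le_gdeg ht hab.symm hne)
            simp [this]) w
        rcases this with h | h | h | h
        · exact huw h.symm
        · exact hxw h.symm
        · exact haw h.symm
        · have h' : w = b := h
          rw [← h'] at hb
          exact hb hw2
    · have := mem_of_closed hc ({u, x, a} : Set V) (Set.mem_insert u _) (by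
          rintro s (rfl | rfl | rfl) t ht
          · simp [hleaf _ _ ht hux]
          · rcases hxn t ht with rfl | rfl <;> simp
          · have : t = x := by
              by_contra hne
              exact ha (two_le_gdeg ht hxa.symm hne)
            simp [this]) w
      rcases this with h | h | h
      · exact huw h.symm
      · exact hxw h.symm
      · exact haw h.symm
  obtain ⟨a, b, c, d, hab, hbc, hcd, hac, had, hbd, h1, h2, h3⟩ := hadd u w huw hnadj
  have du := gdeg_addEdge_left huw hnadj
  have dw := gdeg_addEdge_right huw hnadj
  have dx := fun x => gdeg_addEdge_other (G := G) (x := x) huw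
  rw [addEdge_adj huw] at hab hbc hcd
  set D := gdeg (addEdge G u w) with hD
  have Dlt : ∀ x, x ≠ w → D x < D w := by
    intro x hx
    by_cases hxu : x = u
    · subst hxu; omega
    · have := dx x hxu hx
      have := hw x
      omega
  -- the strict maximum `w` can only be the last vertex
  have hcw : c ≠ w := by
    rintro rfl
    have hdc : d ≠ c := by
      rcases hcd with h | ⟨h, h'⟩ | ⟨h, h'⟩
      · exact h.ne'
      · exact absurd h huw.symm
      · exact h' ▸ huw
    exact absurd h3 (not_le.2 (Dlt d hdc))
  have hbw : b ≠ w := by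
    rintro rfl
    exact absurd h2 (not_le.2 (Dlt c hcw))
  have haw : a ≠ w := by
    rintro rfl
    exact absurd h1 (not_le.2 (Dlt b hbw))
  have hab' : G.Adj a b := by grind
  have hbc' : G.Adj b c := by grind
  by_cases hcu : c = u
  · subst hcu
    have hbc1 := dx b hbc'.ne hbw
    have hac1 := dx a hac haw
    exact key b a hbc'.symm hab'.symm hac (by omega) (by omega) hbw haw
  have hcd' : G.Adj c d := by grind
  by_cases hdu : d = u
  · subst hdu
    have := dx c hcu hcw
    have := dx b hbd hbw
    exact key c b hcd'.symm hbc'.symm hbd (by omega) (by omega) hcw hbw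
  by_cases hbu : b = u
  · subst hbu
    exact hac (hleaf _ _ hab'.symm hbc')
  have hb := dx b hbu hbw
  have hc' := dx c hcu hcw
  refine hno ⟨a, b, c, d, hab', hbc', hcd', hac, had, hbd, ?_, by omega, ?_⟩
  · by_cases hau : a = u
    · subst hau
      have := one_le_gdeg hab'.symm
      omega
    · have := dx a hau haw
      omega
  · by_cases hdw : d = w
    · subst hdw
      exact hw c
    · have := dx d hdu hdw
      omega

/-- With all leaves attached to a vertex `w` of maximum degree, and at most as many edges as
vertices, `w` cannot have two non-leaf neighbours `v` and `b` with `b` having a further neighbour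
`a` other than `v`: counting degrees shows that all vertices other than `w` have degree at
most `2`, and prolonging `w - b - a` by one vertex gives a monotone path on four vertices. -/
lemma no_two_branches [Fintype V] {G : SimpleGraph V} (hno : ¬ HasMono4 G)
    (hE : G.edgeSet.ncard ≤ Fintype.card V) {w v a b : V}
    (hpos : ∀ x, 1 ≤ gdeg G x)
    (hleaf : ∀ x y, gdeg G x = 1 → G.Adj x y → y = w)
    (hw : ∀ x, gdeg G x ≤ gdeg G w) (hv : 2 ≤ gdeg G v) (hwv : G.Adj w v)
    (hbw : G.Adj b w) (hab : G.Adj a b) (hav : a ≠ v) (haw : a ≠ w) (hbv : b ≠ v) : False := by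
  classical
  have hb2 : 2 ≤ gdeg G b := two_le_gdeg hab.symm hbw haw
  have ha2 : 2 ≤ gdeg G a := by
    by_contra h
    exact hbw.ne (hleaf a b (by have := hpos a; omega) hab)
  have hL : (Finset.univ.filter (fun x => G.Adj w x ∧ x ≠ v ∧ x ≠ b)).card + 2 = gdeg G w := by
    have : G.neighborSet w =
        insert v (insert b (((Finset.univ.filter (fun x => G.Adj w x ∧ x ≠ v ∧ x ≠ b)) :
          Finset V) : Set V)) := by
      ext t
      simp only [mem_neighborSet, Set.mem_insert_iff, Finset.coe_filter, Finset.mem_univ,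
        true_and, Set.mem_ofPred_eq]
      have := hbw.symm
      grind
    rw [gdeg, this, Set.ncard_insert_of_notMem (by simp [hbv.symm]) (Set.toFinite _),
      Set.ncard_insert_of_notMem (by simp) (Set.toFinite _), Set.ncard_coe_finset]
  have hS := sum_gdeg_le hE
  -- for `x ≠ w` the value `f x` is at least `2`, and the values `f x` over `x ≠ w` average at most `2`
  set f : V → ℕ := fun x => gdeg G x + if G.Adj w x ∧ x ≠ v ∧ x ≠ b then 1 else 0 with hf
  have hsum : ∑ x, f x ≤ ∑ x, if x = w then gdeg G w else 2 := by
    have h1 : ∑ x, f x = ∑ x, gdeg G x +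
        (Finset.univ.filter (fun x => G.Adj w x ∧ x ≠ v ∧ x ≠ b)).card := by
      rw [hf, Finset.sum_add_distrib, Finset.card_filter]
    have h2 : ∑ x, (if x = w then gdeg G w else 2) + 2 = ∑ _x : V, 2 + gdeg G w := by
      rw [← Finset.add_sum_erase _ _ (Finset.mem_univ w),
        ← Finset.add_sum_erase Finset.univ (fun _ : V => 2) (Finset.mem_univ w)]
      have : ∑ x ∈ Finset.univ.erase w, (if x = w then gdeg G w else 2)
          = ∑ x ∈ Finset.univ.erase w, 2 :=
        Finset.sum_congr rfl fun x hx => if_neg (Finset.ne_of_mem_erase hx)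
      rw [this, if_pos rfl]
      omega
    omega
  have hle : ∀ x ∈ Finset.univ, (if x = w then gdeg G w else 2) ≤ f x := by
    intro x _
    by_cases hx : x = w
    · subst hx; simp [hf]
    · rw [if_neg hx]
      by_cases h1 : gdeg G x = 1
      · obtain ⟨y, hy⟩ := exists_nbr (hpos x)
        have hyw := hleaf x y h1 hy
        subst hyw
        have hxv : x ≠ v := by rintro rfl; omega
        have hxb : x ≠ b := by rintro rfl; omega
        simp [hf, hy.symm, hxv, hxb, h1]
      · have := hpos x
        simp only [hf]
        omega
  have heq := (Finset.sum_eq_sum_iff_of_le hle).1 (le_antisymm (Finset.sum_le_sum hle) hsum)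
  have h2 : ∀ x, x ≠ w → f x = 2 := fun x hx => by
    rw [← heq x (Finset.mem_univ x), if_neg hx]
  have hle2 : ∀ x, x ≠ w → gdeg G x ≤ 2 := fun x hx => by
    have := h2 x hx
    simp only [hf] at this
    omega
  obtain ⟨t, hat, htb⟩ := exists_other_nbr ha2 b
  have htw : t ≠ w := by
    rintro rfl
    have := h2 a haw
    simp only [hf] at this
    rw [if_pos ⟨hat.symm, hav, hab.ne⟩] at this
    omega
  have e1 := hle2 t htw
  have e2 := hle2 a haw
  have e3 := hle2 b hbw.ne
  exact hno ⟨t, a, b, w, hat.symm, hab, hbw, htb, htw, haw, by omega, by omega, hw b⟩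

/-- With a leaf `u` present, its neighbour `w` is the strict maximum; joining `u` to a vertex `v`
of second largest degree creates no monotone path on four vertices. -/
lemma false_of_leaf [Fintype V] {G : SimpleGraph V} (hc : G.Connected) (hno : ¬ HasMono4 G)
    (hE : G.edgeSet.ncard ≤ Fintype.card V)
    (hadd : ∀ u v : V, u ≠ v → ¬ G.Adj u v → HasMono4 (addEdge G u v))
    (h3 : ∃ a b c : V, G.Adj a b ∧ G.Adj b c ∧ a ≠ c ∧ gdeg G a ≤ gdeg G b ∧
      gdeg G b ≤ gdeg G c)
    (hpos : ∀ x, 1 ≤ gdeg G x) {u : V} (hu : gdeg G u = 1) : False := by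
  classical
  obtain ⟨p, q, r, hpq, hqr, hpr, hd1, hd2⟩ := h3
  have hq2 : 2 ≤ gdeg G q := two_le_gdeg hpq.symm hqr hpr
  obtain ⟨w, -, hw⟩ := Finset.exists_max_image Finset.univ (gdeg G) ⟨u, Finset.mem_univ u⟩
  replace hw : ∀ x, gdeg G x ≤ gdeg G w := fun x => hw x (Finset.mem_univ x)
  have hw2 : 2 ≤ gdeg G w := hq2.trans (hw q)
  have hleafAdj : ∀ x, gdeg G x = 1 → G.Adj x w := fun x hx =>
    leaf_adj_max hc hno hadd hx hw hw2
  have hleaf : ∀ x y, gdeg G x = 1 → G.Adj x y → y = w := fun x y hx hy => by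
    by_contra hne
    have := two_le_gdeg hy (hleafAdj x hx) hne
    omega
  have huw : G.Adj u w := hleafAdj u hu
  have hstrict : ∀ x, x ≠ w → gdeg G x < gdeg G w := by
    intro x hx
    refine lt_of_le_of_ne (hw x) fun h => hx ?_
    exact hleaf u x hu (leaf_adj_max hc hno hadd hu (fun y => h ▸ hw y) (h ▸ hw2))
  obtain ⟨v, hv, hvmax⟩ := Finset.exists_max_image (Finset.univ.erase w) (gdeg G)
    ⟨u, by simp [huw.ne]⟩
  replace hvmax : ∀ x, x ≠ w → gdeg G x ≤ gdeg G v := fun x hx => hvmax x (by simp [hx])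
  have hvw : v ≠ w := Finset.ne_of_mem_erase hv
  -- a monotone path on three vertices has a middle vertex other than `w`, so `G` is not a star
  have hqw : q ≠ w := by
    rintro rfl
    have := hstrict r hqr.ne'
    omega
  have hv2 : 2 ≤ gdeg G v := hq2.trans (hvmax q hqw)
  have huv : u ≠ v := by rintro rfl; omega
  have hnadj : ¬ G.Adj u v := fun h => hvw (hleaf u v hu h)
  obtain ⟨a, b, c, d, hab, hbc, hcd, hac, had, hbd, h1, h2, h3⟩ := hadd u v huv hnadj
  have du := gdeg_addEdge_left huv hnadj
  have dv := gdeg_addEdge_right huv hnadj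
  have dx := fun x => gdeg_addEdge_other (G := G) (x := x) huv
  have hab0 := hab.ne
  have hbc0 := hbc.ne
  have hcd0 := hcd.ne
  rw [addEdge_adj huv] at hab hbc hcd
  set D := gdeg (addEdge G u v) with hD
  have dw := dx w huw.ne' hvw.symm
  have hvw' := hstrict v hvw
  -- in the new graph only `w` can have degree at least that of `v`
  have Dv : ∀ x, x ≠ v → D v ≤ D x → x = w := by
    intro x hxv hx
    by_contra hxw
    by_cases hxu : x = u
    · subst hxu; omega
    · have := dx x hxu hxv
      have := hvmax x hxw
      omega
  have Dw : ∀ x, x ≠ w → D w ≤ D x → x = v := by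
    intro x hxw hx
    by_contra hxv
    exact hxw (Dv x hxv (by omega))
  have Du : ∀ x, G.Adj x u ∨ (x = u ∧ u = v) ∨ (x = v ∧ u = u) → ¬ D x ≤ D u := by
    rintro x (h | ⟨_, h⟩ | ⟨rfl, _⟩) hle
    · have := hleaf u x hu h.symm
      subst this
      omega
    · exact huv h
    · omega
  have hbu : b ≠ u := by rintro rfl; exact Du a hab h1
  have hcu : c ≠ u := by rintro rfl; exact Du b hbc h2
  have hdu : d ≠ u := by rintro rfl; exact Du c hcd h3
  have hbv : b ≠ v := by
    rintro rfl
    have e := Dv c hbc0.symm h2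
    have e' := Dv d hbd.symm (h2.trans h3)
    exact hcd0 (e.trans e'.symm)
  have hbw : b ≠ w := by
    rintro rfl
    have e := Dw c hbc0.symm h2
    have e' := Dw d hbd.symm (h2.trans h3)
    exact hcd0 (e.trans e'.symm)
  have hau : a ≠ u := by
    rintro rfl
    rcases hab with h | ⟨_, h⟩ | ⟨h, _⟩
    · exact hbw (hleaf a b hu h)
    · exact hbv h
    · exact huv h
  have hav : a ≠ v := by
    rintro rfl
    exact hbw (Dv b hab0.symm h1)
  have haw : a ≠ w := by
    rintro rfl
    exact hbv (Dw b hab0.symm h1)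
  have hab' : G.Adj a b := by grind
  have hbc' : G.Adj b c := by grind
  have hcd' : G.Adj c d := by grind
  have ea := dx a hau hav
  have eb := dx b hbu hbv
  by_cases hcw : c = w
  · have hdv : d = v := Dw d (hcw ▸ hcd0.symm) (hcw ▸ h3)
    subst hcw hdv
    exact no_two_branches hno hE hpos hleaf hw hv2 hcd' hbc' hab' had hac hbd
  refine hno ⟨a, b, c, d, hab', hbc', hcd', hac, had, hbd, by omega, ?_, ?_⟩
  · by_cases hcv : c = v
    · rw [hcv]; exact hvmax b hbw
    · have := dx c hcu hcv
      omega
  · by_cases hdw : d = w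
    · rw [hdw]; exact hw c
    by_cases hdv : d = v
    · rw [hdv]; exact hvmax c hcw
    have hcv : c ≠ v := fun h => hdw (Dv d hdv (h ▸ h3))
    have := dx c hcu hcv
    have := dx d hdu hdv
    omega

theorem stmt_16 [Fintype V] (G : SimpleGraph V) (hconn : G.Connected)
    (hsat : Saturated G) (hE : G.edgeSet.ncard ≤ Fintype.card V) (hmp : mp G = 3) :
    Nonempty (G ≃g (⊤ : SimpleGraph (Fin 3))) := by
  have hno : ¬ HasMono4 G := fun h => by
    have := h.le_mp
    omega
  have hadd : ∀ u v : V, u ≠ v → ¬ G.Adj u v → HasMono4 (addEdge G u v) := fun u v huv h => by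
    have := hsat u v huv h
    exact hasMono4_of_le_mp (by omega)
  have h3 := exists_mono3_of_le_mp hmp.ge
  have hpos : ∀ x, 1 ≤ gdeg G x := by
    intro x
    by_contra h
    have hx : ∀ y, ¬ G.Adj x y := fun y hy => h (one_le_gdeg hy)
    have hall := mem_of_closed hconn {x} rfl (by
      rintro s rfl t ht
      exact absurd ht (hx t))
    obtain ⟨a, b, _, hab, -⟩ := h3
    exact hab.ne ((hall a).trans (hall b).symm)
  by_cases hl : ∃ u, gdeg G u = 1
  · obtain ⟨u, hu⟩ := hl
    exact (false_of_leaf hconn hno hE hadd h3 hpos hu).elim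
  · refine iso_of_no_leaf hconn hno hE fun x => ?_
    have := hpos x
    have : gdeg G x ≠ 1 := fun h => hl ⟨x, h⟩
    omega
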